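/- arXiv:2311.04136 — 2 statements merged into one kernel-verified Lean document; each statement's English description precedes it below -/
import Mathlib

section
/- Let S = K[x_1,…,x_n] be a standard graded polynomial ring over a field K of prime characteristic p, and let I ⊂ S be a proper nonzero graded ideal. Then α_{pq}(I) ≥ p·α_q(I) for every power q = p^e > 1; consequently the sequence e ↦ α_{p^e}(I)/p^e is non-decreasing in e ≥ 1, and this sequence converges to a real number as e → ∞. -/
open MvPolynomial

attribute [local instance] MvPolynomial.gradedAlgebra

noncomputable section

variable {K : Type*} [Field K] {n : ℕ}

/-- The `q`-th Frobenius power `I^{[q]}` of an ideal. -/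
def frobPow (I : Ideal (MvPolynomial (Fin n) K)) (q : ℕ) : Ideal (MvPolynomial (Fin n) K) :=
  Ideal.span ((fun a => a ^ q) '' (I : Set (MvPolynomial (Fin n) K)))

/-- The associated primes of `S/I`. -/
def Ass (I : Ideal (MvPolynomial (Fin n) K)) : Set (Ideal (MvPolynomial (Fin n) K)) :=
  associatedPrimes (MvPolynomial (Fin n) K) (MvPolynomial (Fin n) K ⧸ I)

/-- The v-number of a graded ideal. -/
def vnum (I : Ideal (MvPolynomial (Fin n) K)) : ℕ :=
  sInf {d : ℕ | ∃ f : MvPolynomial (Fin n) K, f.IsHomogeneous d ∧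
    ∃ 𝔭 ∈ Ass I, I.colon (Ideal.span {f}) = 𝔭}

/-- The local v-number `v_𝔭(I)`. -/
def vnumLocal (I 𝔭 : Ideal (MvPolynomial (Fin n) K)) : ℕ :=
  sInf {d : ℕ | ∃ f : MvPolynomial (Fin n) K, f.IsHomogeneous d ∧
    I.colon (Ideal.span {f}) = 𝔭}

/-- The invariant `α_q(I)`. -/
def alphaq (I : Ideal (MvPolynomial (Fin n) K)) (q : ℕ) : ℕ :=
  sInf {d : ℕ | ∃ f : MvPolynomial (Fin n) K, f.IsHomogeneous d ∧
    f ∈ (frobPow I q).colon I ∧ f ∉ frobPow I q}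

/-- The height of an ideal: the minimal height of an associated prime. -/
def heightI (I : Ideal (MvPolynomial (Fin n) K)) : ℕ :=
  sInf {h : ℕ | ∃ 𝔭 ∈ Ass I, ∃ h𝔭 : 𝔭.IsPrime,
    Order.height (⟨𝔭, h𝔭⟩ : PrimeSpectrum (MvPolynomial (Fin n) K)) = (h : ℕ∞)}

/-- The big height of an ideal: the maximal height of an associated prime. -/
def bightI (I : Ideal (MvPolynomial (Fin n) K)) : ℕ :=
  sSup {h : ℕ | ∃ 𝔭 ∈ Ass I, ∃ h𝔭 : 𝔭.IsPrime,
    Order.height (⟨𝔭, h𝔭⟩ : PrimeSpectrum (MvPolynomial (Fin n) K)) = (h : ℕ∞)}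

/-- A graded (homogeneous) ideal with respect to the standard grading. -/
def IsGraded (I : Ideal (MvPolynomial (Fin n) K)) : Prop :=
  Ideal.IsHomogeneous (homogeneousSubmodule (Fin n) K) I

/-- A monomial ideal. -/
def IsMonomialIdeal (I : Ideal (MvPolynomial (Fin n) K)) : Prop :=
  ∃ s : Set (Fin n →₀ ℕ), I = Ideal.span ((fun a => monomial a (1 : K)) '' s)

/-- Killing finitely many homogeneous elements while staying outside `J`. -/
theorem exists_socle (T : Finset (MvPolynomial (Fin n) K)) :
    (∀ g ∈ T, ∃ d, g.IsHomogeneous d) →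
    ∃ C : ℕ, ∀ (q : ℕ) (J : Ideal (MvPolynomial (Fin n) K)), J ≠ ⊤ → (∀ g ∈ T, g ^ q ∈ J) →
      ∃ d, d ≤ q * C ∧ ∃ f : MvPolynomial (Fin n) K, f.IsHomogeneous d ∧ f ∉ J ∧
        ∀ g ∈ T, f * g ∈ J := by
  classical
  induction T using Finset.induction_on with
  | empty =>
    intro _
    refine ⟨0, fun q J hJ _ => ⟨0, le_refl _, 1, isHomogeneous_one _ _, ?_, by simp⟩⟩
    rwa [← Ideal.ne_top_iff_one]
  | insert g T hg ih =>
    intro hT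
    obtain ⟨C, hC⟩ := ih (fun x hx => hT x (Finset.mem_insert_of_mem hx))
    obtain ⟨e, he⟩ := hT g (Finset.mem_insert_self _ _)
    refine ⟨C + e, fun q J hJ hq => ?_⟩
    obtain ⟨d, hd, f, hf, hfJ, hfT⟩ := hC q J hJ (fun x hx => hq x (Finset.mem_insert_of_mem hx))
    have hex : ∃ k, f * g ^ k ∈ J := ⟨q, J.mul_mem_left _ (hq g (Finset.mem_insert_self _ _))⟩
    have hle : Nat.find hex ≤ q := 
      Nat.find_min' hex (J.mul_mem_left _ (hq g (Finset.mem_insert_self _ _)))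
    have hmem := Nat.find_spec hex
    have hmin := fun k => Nat.find_min hex (m := k)
    generalize Nat.find hex = k at hle hmem hmin
    cases k with
    | zero => simp at hmem; exact absurd hmem hfJ
    | succ k =>
      refine ⟨d + e * k, ?_, f * g ^ k, hf.mul (he.pow k), hmin k (Nat.lt_succ_self k), ?_⟩
      · have : e * k ≤ e * q := Nat.mul_le_mul_left _ (by omega)
        nlinarith
      · intro x hx
        rcases Finset.mem_insert.1 hx with rfl | hx
        · rw [mul_assoc, ← pow_succ]; exact hmem
        · have := J.mul_mem_right (g ^ k) (hfT x hx)
          rwa [mul_right_comm] at this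

theorem frobPow_le {I : Ideal (MvPolynomial (Fin n) K)} {q : ℕ} (hq : 1 ≤ q) :
    frobPow I q ≤ I := by
  rw [frobPow, Ideal.span_le]
  rintro _ ⟨a, ha, rfl⟩
  exact Ideal.pow_mem_of_mem I ha q hq

theorem exists_alpha_bound (I : Ideal (MvPolynomial (Fin n) K)) (hgr : IsGraded I) (htop : I ≠ ⊤) :
    ∃ C : ℕ, ∀ q : ℕ, 1 ≤ q → ∃ d, d ≤ q * C ∧ ∃ f : MvPolynomial (Fin n) K, f.IsHomogeneous d ∧
      f ∈ (frobPow I q).colon I ∧ f ∉ frobPow I q := by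
  obtain ⟨S, hS⟩ := (Ideal.IsHomogeneous.iff_exists _ _).1 hgr
  have hfg : I.FG := IsNoetherian.noetherian I
  rw [hS] at hfg
  obtain ⟨T, hTS, hT⟩ := Submodule.fg_span_iff_fg_span_finset_subset _ |>.1 hfg
  have hI : I = Ideal.span (T : Set (MvPolynomial (Fin n) K)) := hS.trans hT
  obtain ⟨C, hC⟩ := exists_socle T (by
    intro g hg
    obtain ⟨x, hx, rfl⟩ := hTS hg
    obtain ⟨d, hd⟩ := x.2
    exact ⟨d, (mem_homogeneousSubmodule _ _).1 hd⟩)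
  refine ⟨C, fun q hq => ?_⟩
  obtain ⟨d, hd, f, hf, hfJ, hfT⟩ := hC q (frobPow I q)
    (fun h => htop (top_le_iff.1 (h ▸ frobPow_le hq)))
    (fun g hg => Ideal.subset_span ⟨g, by rw [hI]; exact Ideal.subset_span hg, rfl⟩)
  refine ⟨d, hd, f, hf, ?_, hfJ⟩
  rw [Submodule.mem_colon]
  intro s hs
  rw [smul_eq_mul]
  have hs' : s ∈ Ideal.span (T : Set (MvPolynomial (Fin n) K)) := hI ▸ hs
  induction hs' using Submodule.span_induction with
  | mem x hx => exact hfT x hx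
  | zero => simp
  | add x y hx hy h1 h2 =>
    rw [mul_add]
    exact add_mem (h1 (by rw [hI]; exact hx)) (h2 (by rw [hI]; exact hy))
  | smul a x hx h =>
    rw [smul_eq_mul, mul_left_comm]
    exact Ideal.mul_mem_left _ _ (h (by rw [hI]; exact hx))

theorem frobPow_frobPow (p : ℕ) [Fact p.Prime] [CharP K p]
    (I : Ideal (MvPolynomial (Fin n) K)) (q : ℕ) :
    frobPow (frobPow I q) p = frobPow I (p * q) := by
  apply le_antisymm
  · conv_lhs => rw [frobPow]
    rw [Ideal.span_le]
    rintro _ ⟨a, ha, rfl⟩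
    change a ^ p ∈ frobPow I (p * q)
    change a ∈ Ideal.span _ at ha
    induction ha using Submodule.span_induction with
    | mem x hx =>
      obtain ⟨y, hy, rfl⟩ := hx
      exact Ideal.subset_span ⟨y, hy, by simp only [← pow_mul, mul_comm]⟩
    | zero => rw [zero_pow (Fact.out : p.Prime).ne_zero]; exact zero_mem _
    | add x y _ _ h1 h2 => rw [add_pow_char]; exact add_mem h1 h2
    | smul a x _ h => rw [smul_eq_mul, mul_pow]; exact Ideal.mul_mem_left _ _ h
  · conv_lhs => rw [frobPow]
    rw [Ideal.span_le]
    rintro _ ⟨a, ha, rfl⟩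
    exact Ideal.subset_span ⟨a ^ q, Ideal.subset_span ⟨a, ha, rfl⟩, by
      simp only [← pow_mul, mul_comm]⟩

/-- A basis of `K` over `K^p`, with coordinates read through Frobenius. -/
theorem exists_frob_basis.{u} (K : Type u) [Field K] (p : ℕ) [Fact p.Prime] [CharP K p] :
    ∃ (ι : Type u) (b : ι → K) (ψ : ι → K →+ K),
      (∀ j c x, ψ j (c ^ p * x) = c * ψ j x) ∧
      ∀ c, ∃ T : Finset ι, ∀ T', T ⊆ T' → ∑ j ∈ T', (ψ j c) ^ p * b j = c := by
  classical
  let F := (frobenius K p).fieldRange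
  let E := (frobenius K p).rangeRestrictFieldEquiv
  let b := Module.Basis.ofVectorSpace F K
  have hE : ∀ x : F, (E.symm x) ^ p = (x : K) := fun x =>
    RingHom.rangeRestrictFieldEquiv_apply_symm_apply (frobenius K p) x
  refine ⟨Module.Basis.ofVectorSpaceIndex F K, b, fun j => 
    { toFun := fun c => E.symm (b.repr c j)
      map_zero' := by simp
      map_add' := by simp }, ?_, ?_⟩
  · intro j c x
    change E.symm (b.repr (c ^ p * x) j) = c * E.symm (b.repr x j)
    have : c ^ p * x = (E c) • x := rfl
    rw [this, map_smul, Finsupp.smul_apply, smul_eq_mul, map_mul, RingEquiv.symm_apply_apply]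
  · intro c
    refine ⟨(b.repr c).support, fun T' hT' => ?_⟩
    conv_rhs => rw [← b.linearCombination_repr c]
    rw [Finsupp.linearCombination_apply, Finsupp.sum_of_support_subset _ hT' _ (by simp)]
    refine Finset.sum_congr rfl fun j _ => ?_
    change (E.symm (b.repr c j)) ^ p * b j = _
    rw [hE]; rfl

theorem expo_inj {p : ℕ} (hp : 0 < p) (a : Fin n →₀ ℕ) :
    Function.Injective (fun m : Fin n →₀ ℕ => p • m + a) := by
  intro m m' h
  ext i
  have := DFunLike.congr_fun h i
  simp at this
  rcases this with h | h
  · exact h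
  · omega

/-- The Cartier-type map attached to `ψ` and an exponent `a`. -/
def cart (p : ℕ) (hp : 0 < p) (ψ : K →+ K) (a : Fin n →₀ ℕ) (f : MvPolynomial (Fin n) K) :
    MvPolynomial (Fin n) K :=
  ∑ m ∈ f.support.preimage (fun m : Fin n →₀ ℕ => p • m + a) (expo_inj hp a).injOn,
    monomial m (ψ (coeff (p • m + a) f))

theorem coeff_cart (p : ℕ) (hp : 0 < p) (ψ : K →+ K) (a : Fin n →₀ ℕ)
    (f : MvPolynomial (Fin n) K) (m : Fin n →₀ ℕ) :
    coeff m (cart p hp ψ a f) = ψ (coeff (p • m + a) f) := by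
  classical
  rw [cart, coeff_sum]
  simp only [coeff_monomial]
  rw [Finset.sum_ite_eq' ]
  split_ifs with h
  · rfl
  · simp at h
    rw [h, map_zero]

theorem cart_add (p : ℕ) (hp : 0 < p) (ψ : K →+ K) (a : Fin n →₀ ℕ)
    (f g : MvPolynomial (Fin n) K) :
    cart p hp ψ a (f + g) = cart p hp ψ a f + cart p hp ψ a g := by
  ext m; simp [coeff_cart]

theorem cart_zero (p : ℕ) (hp : 0 < p) (ψ : K →+ K) (a : Fin n →₀ ℕ) :
    cart p hp ψ a (0 : MvPolynomial (Fin n) K) = 0 := by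
  ext m; simp [coeff_cart]

theorem cart_pow_mul (p : ℕ) (hp : 0 < p) [Fact p.Prime] [CharP K p] (ψ : K →+ K)
    (hψ : ∀ c x, ψ (c ^ p * x) = c * ψ x) (a : Fin n →₀ ℕ) (ha : ∀ i, a i < p)
    (u f : MvPolynomial (Fin n) K) :
    cart p hp ψ a (u ^ p * f) = u * cart p hp ψ a f := by
  induction u using MvPolynomial.induction_on' with
  | monomial s c =>
    ext m
    rw [coeff_cart, monomial_pow, coeff_monomial_mul', coeff_monomial_mul']
    have hiff : p • s ≤ p • m + a ↔ s ≤ m := by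
      constructor
      · intro h i
        have h1 := h i
        have h2 := ha i
        simp at h1
        by_contra hc
        push Not at hc
        have : p * (m i + 1) ≤ p * s i := Nat.mul_le_mul_left _ hc
        rw [mul_add] at this
        omega
      · intro h i
        have : p * s i ≤ p * m i := Nat.mul_le_mul_left _ (h i)
        simp; omega
    by_cases h : s ≤ m
    · rw [if_pos (hiff.2 h), if_pos h, hψ, coeff_cart]
      congr 3
      obtain ⟨t, rfl⟩ := exists_add_of_le h
      rw [add_tsub_cancel_left, smul_add, add_assoc, add_tsub_cancel_left]
    · rw [if_neg (fun h' => h (hiff.1 h')), if_neg h, map_zero]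
  | add u v hu hv => rw [add_pow_char, add_mul, cart_add, hu, hv, add_mul]

theorem cart_mem (p : ℕ) (hp : 0 < p) [Fact p.Prime] [CharP K p] (ψ : K →+ K)
    (hψ : ∀ c x, ψ (c ^ p * x) = c * ψ x) (a : Fin n →₀ ℕ) (ha : ∀ i, a i < p)
    (J : Ideal (MvPolynomial (Fin n) K)) (f : MvPolynomial (Fin n) K) (hf : f ∈ frobPow J p) :
    cart p hp ψ a f ∈ J := by
  rw [frobPow] at hf
  suffices h : ∀ r, cart p hp ψ a (r * f) ∈ J by simpa using h 1
  induction hf using Submodule.span_induction with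
  | mem x hx =>
    obtain ⟨y, hy, rfl⟩ := hx
    intro r
    dsimp only
    rw [mul_comm, cart_pow_mul p hp ψ hψ a ha]
    exact J.mul_mem_right _ hy
  | zero => intro r; rw [mul_zero, cart_zero]; exact zero_mem _
  | add x y _ _ h1 h2 => intro r; rw [mul_add, cart_add]; exact add_mem (h1 r) (h2 r)
  | smul b x _ h => intro r; rw [smul_eq_mul, ← mul_assoc]; exact h _

theorem cart_homog (p : ℕ) (hp : 0 < p) (ψ : K →+ K) (a : Fin n →₀ ℕ)
    (f : MvPolynomial (Fin n) K) (d : ℕ) (hf : f.IsHomogeneous d) :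
    (cart p hp ψ a f).IsHomogeneous ((d - a.degree) / p) := by
  rw [IsHomogeneous, IsWeightedHomogeneous]
  intro m hm
  rw [coeff_cart] at hm
  have h := hf (d := p • m + a) (fun h0 => hm (by rw [h0, map_zero]))
  have hw : ∀ k : Fin n →₀ ℕ, Finsupp.weight (1 : Fin n → ℕ) k = k.degree := fun k =>
    (DFunLike.congr_fun (Finsupp.degree_eq_weight_one (σ := Fin n) (R := ℕ)) k).symm
  rw [hw] at h ⊢
  rw [map_add, map_nsmul, smul_eq_mul] at h
  rw [← h, Nat.add_sub_cancel, Nat.mul_div_cancel_left _ hp]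

/-- Reconstruction: `f` lies in the Frobenius power as soon as all its Cartier images lie in `J`. -/
theorem mem_of_cart (p : ℕ) (hp : 0 < p) [Fact p.Prime] [CharP K p]
    {ι : Type*} (b : ι → K) (ψ : ι → K →+ K)
    (hb : ∀ c, ∃ T : Finset ι, ∀ T', T ⊆ T' → ∑ j ∈ T', (ψ j c) ^ p * b j = c)
    (J : Ideal (MvPolynomial (Fin n) K)) (f : MvPolynomial (Fin n) K)
    (h : ∀ j (a : Fin n →₀ ℕ), (∀ i, a i < p) → cart p hp (ψ j) a f ∈ J) :
    f ∈ frobPow J p := by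
  classical
  choose T hT using hb
  let md : (Fin n →₀ ℕ) → (Fin n →₀ ℕ) := fun m => m.mapRange (· % p) (by simp)
  let dv : (Fin n →₀ ℕ) → (Fin n →₀ ℕ) := fun m => m.mapRange (· / p) (by simp)
  have hmda : ∀ m i, md m i = m i % p := fun _ _ => rfl
  have hdva : ∀ m i, dv m i = m i / p := fun _ _ => rfl
  have hmd : ∀ m, p • dv m + md m = m := by
    intro m; ext i; simp [hmda, hdva, Nat.div_add_mod]
  have hlt : ∀ m i, md m i < p := fun m i => Nat.mod_lt _ hp
  let A := f.support.image md
  let U := f.support.biUnion (fun m => T (coeff m f))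
  let G : MvPolynomial (Fin n) K →+ MvPolynomial (Fin n) K :=
    { toFun := fun g => ∑ a ∈ A, ∑ j ∈ U, (cart p hp (ψ j) a g) ^ p * monomial a (b j)
      map_zero' := by
        simp [cart_zero, hp.ne']
      map_add' := by
        intro x y
        simp only [cart_add, add_pow_char, add_mul, Finset.sum_add_distrib] }
  have hmono : ∀ m ∈ f.support, G (monomial m (coeff m f)) = monomial m (coeff m f) := by
    intro m hm
    change ∑ a ∈ A, ∑ j ∈ U, (cart p hp (ψ j) a (monomial m (coeff m f))) ^ p * monomial a (b j) = _
    rw [Finset.sum_eq_single (md m)]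
    · have hc : ∀ j, cart p hp (ψ j) (md m) (monomial m (coeff m f))
          = monomial (dv m) (ψ j (coeff m f)) := by
        intro j
        ext k
        rw [coeff_cart, coeff_monomial, coeff_monomial]
        have : m = p • k + md m ↔ dv m = k := by
          constructor
          · intro h
            exact expo_inj hp (md m) ((hmd m).trans h)
          · rintro rfl; exact (hmd m).symm
        by_cases hk : dv m = k
        · rw [if_pos (this.2 hk), if_pos hk]
        · rw [if_neg (fun h' => hk (this.1 h')), if_neg hk, map_zero]
      simp only [hc, monomial_pow, monomial_mul, hmd]
      rw [← map_sum, hT (coeff m f) U]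
      exact Finset.subset_biUnion_of_mem (fun m => T (coeff m f)) hm
    · intro a ha hne
      obtain ⟨m', _, rfl⟩ := Finset.mem_image.1 ha
      refine Finset.sum_eq_zero fun j _ => ?_
      have : cart p hp (ψ j) (md m') (monomial m (coeff m f)) = 0 := by
        ext k
        rw [coeff_cart, coeff_monomial, if_neg, map_zero, coeff_zero]
        intro hmk
        apply hne
        rw [hmk]
        ext i
        simp [hmda]
      rw [this, zero_pow hp.ne', zero_mul]
    · intro hn
      exact absurd (Finset.mem_image_of_mem md hm) hn
  have hG : G f = f := by
    conv_rhs => rw [f.as_sum]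
    conv_lhs => rw [f.as_sum]
    rw [map_sum]
    exact Finset.sum_congr rfl hmono
  rw [← hG]
  refine sum_mem fun a ha => sum_mem fun j _ => Ideal.mul_mem_right _ _ (Ideal.subset_span ?_)
  obtain ⟨m', _, rfl⟩ := Finset.mem_image.1 ha
  exact ⟨_, h j _ (hlt m'), rfl⟩

theorem alpha_mul_le (p : ℕ) [Fact p.Prime] [CharP K p]
    (I : Ideal (MvPolynomial (Fin n) K)) (hgr : IsGraded I) (htop : I ≠ ⊤) (q : ℕ) (hq : 1 ≤ q) :
    p * alphaq I q ≤ alphaq I (p * q) := by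
  have hp : 0 < p := (Fact.out : p.Prime).pos
  obtain ⟨C, hC⟩ := exists_alpha_bound I hgr htop
  obtain ⟨d0, -, hd0⟩ := hC (p * q) (Nat.mul_pos hp hq)
  have hmem := Nat.sInf_mem (s := {d : ℕ | ∃ f : MvPolynomial (Fin n) K, f.IsHomogeneous d ∧
    f ∈ (frobPow I (p * q)).colon I ∧ f ∉ frobPow I (p * q)}) ⟨d0, hd0⟩
  change alphaq I (p * q) ∈ _ at hmem
  generalize alphaq I (p * q) = d at hmem
  obtain ⟨f, hf, hfc, hfn⟩ := hmem
  obtain ⟨ι, b, ψ, hψ, hb⟩ := exists_frob_basis K p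
  rw [← frobPow_frobPow] at hfn hfc
  have := mt (mem_of_cart p hp b ψ hb (frobPow I q) f) hfn
  push Not at this
  obtain ⟨j, a, ha, hja⟩ := this
  have hle : alphaq I q ≤ (d - a.degree) / p := by
    refine Nat.sInf_le ⟨_, cart_homog p hp (ψ j) a f d hf, ?_, hja⟩
    rw [Submodule.mem_colon] at hfc ⊢
    intro s hs
    rw [smul_eq_mul, mul_comm, ← cart_pow_mul p hp (ψ j) (hψ j) a ha]
    apply cart_mem p hp (ψ j) (hψ j) a ha
    have h1 := Ideal.mul_mem_left _ (s ^ (p - 1)) (hfc s hs)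
    have h2 : s ^ (p - 1) * (f • s) = s ^ p * f := by
      conv_rhs => rw [← Nat.sub_add_cancel hp, pow_succ]
      rw [smul_eq_mul]; ring
    rwa [h2] at h1
  calc p * alphaq I q ≤ p * ((d - a.degree) / p) := Nat.mul_le_mul_left _ hle
    _ ≤ d - a.degree := Nat.mul_div_le _ _
    _ ≤ d := Nat.sub_le _ _

theorem stmt16 {K : Type*} [Field K] {n : ℕ} (p : ℕ) (hp : p.Prime) [CharP K p]
    (I : Ideal (MvPolynomial (Fin n) K)) (hgr : IsGraded I) (htop : I ≠ ⊤) (hbot : I ≠ ⊥) :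
    (∀ q : ℕ, (∃ e : ℕ, q = p ^ e) → 1 < q → p * alphaq I q ≤ alphaq I (p * q)) ∧
    (∀ e e' : ℕ, 1 ≤ e → e ≤ e' →
      (alphaq I (p ^ e) : ℝ) / (p ^ e : ℝ) ≤ (alphaq I (p ^ e') : ℝ) / (p ^ e' : ℝ)) ∧
    (∃ L : ℝ, Filter.Tendsto (fun e : ℕ => (alphaq I (p ^ e) : ℝ) / (p ^ e : ℝ))
      Filter.atTop (nhds L)) := by
  haveI : Fact p.Prime := ⟨hp⟩
  have hmono : Monotone (fun e : ℕ => (alphaq I (p ^ e) : ℝ) / (p ^ e : ℝ)) := by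
    refine monotone_nat_of_le_succ fun e => ?_
    have hpos : (0 : ℝ) < p := by exact_mod_cast hp.pos
    have h := alpha_mul_le p I hgr htop (p ^ e) (Nat.one_le_pow _ _ hp.pos)
    rw [← pow_succ'] at h
    have h' : (p : ℝ) * alphaq I (p ^ e) ≤ alphaq I (p ^ (e + 1)) := by exact_mod_cast h
    rw [div_le_div_iff₀ (by positivity) (by positivity), pow_succ]
    have h3 := mul_le_mul_of_nonneg_right h' (by positivity : (0 : ℝ) ≤ (p : ℝ) ^ e)
    linarith
  refine ⟨fun q _ hq => alpha_mul_le p I hgr htop q hq.le, fun e e' _ h => hmono h, ?_⟩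
  obtain ⟨C, hC⟩ := exists_alpha_bound I hgr htop
  refine ⟨_, tendsto_atTop_ciSup hmono ⟨(C : ℝ), ?_⟩⟩
  rintro _ ⟨e, rfl⟩
  obtain ⟨d, hd, hd'⟩ := hC (p ^ e) (Nat.one_le_pow _ _ hp.pos)
  have h1 : alphaq I (p ^ e) ≤ d := Nat.sInf_le hd'
  have hpos : (0 : ℝ) < p := by exact_mod_cast hp.pos
  have h2 : (alphaq I (p ^ e) : ℝ) ≤ (p : ℝ) ^ e * C := by exact_mod_cast h1.trans hd
  change (alphaq I (p ^ e) : ℝ) / (p ^ e : ℝ) ≤ C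
  rw [div_le_iff₀ (by positivity)]
  linarith

end
end

section
/- Let S = K[x_1,…,x_n] be a standard graded polynomial ring over a field K of prime characteristic p, and let I ⊂ S be a proper nonzero unmixed square-free monomial ideal. Then for every power q = p^e with q > n (= dim S), we have ⌈α_q(I)/q⌉ = v(I) + height(I), where ⌈z⌉ denotes the least integer greater than or equal to z. -/
open MvPolynomial

attribute [local instance] MvPolynomial.gradedAlgebra

noncomputable section

variable {K : Type*} [Field K] {n : ℕ}

/-- Vertex covers. -/
def Cov (s : Set (Fin n →₀ ℕ)) (C : Finset (Fin n)) : Prop := ∀ a ∈ s, ∃ i ∈ C, a i ≠ 0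

/-- Minimal vertex covers. -/
def MinCov (s : Set (Fin n →₀ ℕ)) (C : Finset (Fin n)) : Prop := Minimal (Cov s) C

variable (K) in
/-- The monomial prime of a set of variables. -/
def PC (C : Finset (Fin n)) : Ideal (MvPolynomial (Fin n) K) :=
  Ideal.span (X '' (C : Set (Fin n)))

lemma mem_PC {C : Finset (Fin n)} {f : MvPolynomial (Fin n) K} :
    f ∈ PC K C ↔ ∀ m ∈ f.support, ∃ i ∈ C, m i ≠ 0 := by
  unfold PC
  rw [mem_ideal_span_X_image]
  simp

lemma monomial_mem_PC {C : Finset (Fin n)} {m : Fin n →₀ ℕ} :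
    (monomial m (1 : K)) ∈ PC K C ↔ ∃ i ∈ C, m i ≠ 0 := by
  classical
  rw [mem_PC, support_monomial]
  simp

lemma PC_le {C C' : Finset (Fin n)} : PC K C ≤ PC K C' ↔ C ⊆ C' := by
  constructor
  · intro h i hi
    have h1 : (monomial (Finsupp.single i 1) (1 : K)) ∈ PC K C' :=
      h (monomial_mem_PC.2 ⟨i, hi, by simp⟩)
    obtain ⟨j, hj, hj'⟩ := monomial_mem_PC.1 h1
    have : i = j := by
      by_contra hne
      exact hj' (by simp [Finsupp.single_apply, hne])
    exact this ▸ hj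
  · intro h
    exact Ideal.span_mono (Set.image_mono (by exact_mod_cast h))

lemma PC_inj {C C' : Finset (Fin n)} (h : PC K C = PC K C') : C = C' :=
  (PC_le.1 h.le).antisymm (PC_le.1 h.ge)

instance PC_prime (C : Finset (Fin n)) : (PC K C).IsPrime := by
  classical
  let φ : MvPolynomial (Fin n) K →ₐ[K] MvPolynomial (Fin n) K :=
    aeval (fun i => if i ∈ C then 0 else X i)
  have hsub : ∀ f, f - φ f ∈ PC K C := by
    have : (Ideal.Quotient.mkₐ K (PC K C)).comp φ = Ideal.Quotient.mkₐ K (PC K C) := by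
      apply MvPolynomial.algHom_ext
      intro i
      by_cases hi : i ∈ C
      · have : (X i : MvPolynomial (Fin n) K) ∈ PC K C := Ideal.subset_span ⟨i, hi, rfl⟩
        simp [φ, hi, Ideal.Quotient.eq_zero_iff_mem.2 this]
      · simp [φ, hi]
    intro f
    rw [← Ideal.Quotient.eq]
    exact (DFunLike.congr_fun this f).symm
  have : PC K C = RingHom.ker φ := by
    apply le_antisymm
    · refine Ideal.span_le.2 ?_
      rintro _ ⟨i, hi, rfl⟩
      have hi' : i ∈ C := hi
      simp [φ, RingHom.mem_ker, hi']
    · intro f hf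
      have := hsub f
      rw [RingHom.mem_ker] at hf
      simpa [hf] using this
  rw [this]
  exact RingHom.ker_isPrime _

lemma PC_height (C : Finset (Fin n)) (h : (PC K C).IsPrime) :
    Order.height (⟨PC K C, h⟩ : PrimeSpectrum (MvPolynomial (Fin n) K)) = (C.card : ℕ∞) := by
  classical
  apply le_antisymm
  · have h1 : (PC K C).height ≤ (X '' (C : Set (Fin n)) : Set (MvPolynomial (Fin n) K)).ncard := by
      apply Ideal.height_le_card_of_mem_minimalPrimes_span (C.finite_toSet.image _)
      change PC K C ∈ (PC K C).minimalPrimes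
      rw [Ideal.minimalPrimes_eq_subsingleton_self]
      rfl
    have h2 : (X '' (C : Set (Fin n)) : Set (MvPolynomial (Fin n) K)).ncard ≤ C.card := by
      rw [← Set.ncard_coe_finset C]
      exact Set.ncard_image_le C.finite_toSet
    have h3 := PrimeSpectrum.height_eq_orderHeight (⟨PC K C, h⟩ : PrimeSpectrum (MvPolynomial (Fin n) K))
    rw [← h3]
    exact h1.trans (by exact_mod_cast h2)
  · induction C using Finset.induction_on with
    | empty => simp
    | insert a C ha ih =>
      rw [Finset.card_insert_of_notMem ha]
      push_cast
      refine (add_le_add_left (ih (PC_prime C)) 1).trans ?_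
      apply Order.height_add_one_le
      refine lt_of_le_of_ne ?_ ?_
      · exact PC_le.2 (Finset.subset_insert a C)
      · intro he
        have h2 := PC_inj (congrArg PrimeSpectrum.asIdeal he)
        exact ha (h2 ▸ Finset.mem_insert_self a C)

lemma exists_minCov_le {s : Set (Fin n →₀ ℕ)} {C : Finset (Fin n)} (h : Cov s C) :
    ∃ C' ⊆ C, MinCov s C' := by
  obtain ⟨C', h1, h2⟩ := exists_minimal_le_of_wellFoundedLT (Cov s) C h
  exact ⟨C', h1, h2⟩

/-- Duality. -/
lemma dual (s : Set (Fin n →₀ ℕ)) (A : Fin n → Prop) :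
    (∃ a ∈ s, ∀ i, a i ≠ 0 → A i) ↔ ∀ C, MinCov s C → ∃ i ∈ C, A i := by
  classical
  constructor
  · rintro ⟨a, ha, h⟩ C hC
    obtain ⟨i, hi, h'⟩ := hC.1 a ha
    exact ⟨i, hi, h i h'⟩
  · intro h
    by_contra! hcon
    have : Cov s (Finset.univ.filter (fun i => ¬ A i)) := by
      intro a ha
      obtain ⟨i, h1, h2⟩ := hcon a ha
      exact ⟨i, by simpa using h2, h1⟩
    obtain ⟨C, hC, hm⟩ := exists_minCov_le this
    obtain ⟨i, hi, hA⟩ := h C hm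
    have := hC hi
    simp at this
    exact this hA

lemma minCov_private {s : Set (Fin n →₀ ℕ)} {C : Finset (Fin n)} (h : MinCov s C) {i : Fin n}
    (hi : i ∈ C) : ∃ a ∈ s, ∀ j ∈ C, a j ≠ 0 → j = i := by
  classical
  by_contra! hcon
  have : Cov s (C.erase i) := by
    intro a ha
    obtain ⟨j, hj, h1, h2⟩ := hcon a ha
    exact ⟨j, Finset.mem_erase.2 ⟨h2, hj⟩, h1⟩
  have := h.2 this (Finset.erase_subset _ _) hi
  simp at this

section main
variable {s : Set (Fin n →₀ ℕ)} {I : Ideal (MvPolynomial (Fin n) K)}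

lemma mem_I (hs : ∀ a ∈ s, ∀ i, a i ≤ 1)
    (hI : I = Ideal.span ((fun a => monomial a (1 : K)) '' s)) (f : MvPolynomial (Fin n) K) :
    f ∈ I ↔ ∀ C, MinCov s C → f ∈ PC K C := by
  have key : ∀ m : Fin n →₀ ℕ, (∃ a ∈ s, a ≤ m) ↔ ∀ C, MinCov s C → ∃ i ∈ C, m i ≠ 0 := by
    intro m
    rw [← dual s (fun i => m i ≠ 0)]
    refine exists_congr fun a => and_congr_right fun ha => ?_
    refine forall_congr' fun i => ?_
    have := hs a ha i
    change a i ≤ m i ↔ _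
    omega
  rw [hI, mem_ideal_span_monomial_image]
  simp only [key, mem_PC]
  tauto

lemma mem_frob (p : ℕ) (hp : p.Prime) [CharP K p] (hs : ∀ a ∈ s, ∀ i, a i ≤ 1)
    (hI : I = Ideal.span ((fun a => monomial a (1 : K)) '' s)) (e : ℕ)
    (f : MvPolynomial (Fin n) K) :
    f ∈ frobPow I (p ^ e) ↔ ∀ m ∈ f.support, ∀ C, MinCov s C → ∃ i ∈ C, p ^ e ≤ m i := by
  haveI : ExpChar (MvPolynomial (Fin n) K) p := by
    haveI := ExpChar.prime (R := K) hp
    infer_instance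
  have hpos : 0 < p ^ e := pow_pos hp.pos e
  have h1 : frobPow I (p ^ e) = I.map (iterateFrobenius (MvPolynomial (Fin n) K) p e) := rfl
  have h2 : frobPow I (p ^ e) =
      Ideal.span ((fun a => monomial a (1 : K)) '' ((fun a => p ^ e • a) '' s)) := by
    rw [h1, hI, Ideal.map_span, Set.image_image, Set.image_image]
    congr 1
    apply Set.image_congr
    intro a _
    simp [iterateFrobenius_def, monomial_pow]
  rw [h2, mem_ideal_span_monomial_image]
  refine forall₂_congr fun m _ => ?_
  rw [← dual s (fun i => p ^ e ≤ m i), Set.exists_mem_image]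
  refine exists_congr fun a => and_congr_right fun ha => ?_
  refine forall_congr' fun i => ?_
  have := hs a ha i
  change p ^ e * a i ≤ m i ↔ _
  have h3 : a i = 0 ∨ a i = 1 := by omega
  rcases h3 with h3 | h3 <;> simp [h3]

lemma mem_colonI (hs : ∀ a ∈ s, ∀ i, a i ≤ 1)
    (hI : I = Ideal.span ((fun a => monomial a (1 : K)) '' s)) (f g : MvPolynomial (Fin n) K) :
    g ∈ I.colon (Ideal.span {f} : Set (MvPolynomial (Fin n) K)) ↔
      ∀ C, MinCov s C → g ∈ PC K C ∨ f ∈ PC K C := by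
  rw [Ideal.mem_colon_span_singleton, mem_I hs hI]
  refine forall₂_congr fun C _ => ?_
  exact (PC_prime C).mul_mem_iff_mem_or_mem

lemma colon_eq_of_isolating (hs : ∀ a ∈ s, ∀ i, a i ≤ 1)
    (hI : I = Ideal.span ((fun a => monomial a (1 : K)) '' s)) {f : MvPolynomial (Fin n) K}
    {C : Finset (Fin n)} (hC : MinCov s C) (hf : f ∉ PC K C)
    (h : ∀ C', MinCov s C' → C' ≠ C → f ∈ PC K C') :
    I.colon (Ideal.span {f} : Set (MvPolynomial (Fin n) K)) = PC K C := by
  ext g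
  rw [mem_colonI hs hI]
  constructor
  · intro hg
    exact (hg C hC).resolve_right hf
  · intro hg C' hC'
    by_cases he : C' = C
    · exact Or.inl (he ▸ hg)
    · exact Or.inr (h C' hC' he)

lemma isolating_of_prime (hs : ∀ a ∈ s, ∀ i, a i ≤ 1)
    (hI : I = Ideal.span ((fun a => monomial a (1 : K)) '' s)) {f : MvPolynomial (Fin n) K}
    {P : Ideal (MvPolynomial (Fin n) K)} (hP : P.IsPrime)
    (h : I.colon (Ideal.span {f} : Set (MvPolynomial (Fin n) K)) = P) :
    ∃ C, MinCov s C ∧ P = PC K C ∧ f ∉ PC K C ∧ ∀ C', MinCov s C' → C' ≠ C → f ∈ PC K C' := by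
  classical
  let T : Finset (Finset (Fin n)) := Finset.univ.filter fun C => MinCov s C ∧ f ∉ PC K C
  have hT : T.inf (PC K) ≤ P := by
    intro g hg
    rw [← h, mem_colonI hs hI]
    intro C hC
    by_cases hf : f ∈ PC K C
    · exact Or.inr hf
    · left
      have : T.inf (PC K) ≤ PC K C := Finset.inf_le (by simp [T, hC, hf])
      exact this hg
  obtain ⟨C, hCT, hle⟩ := (Ideal.IsPrime.inf_le' hP).1 hT
  have hCT' : MinCov s C ∧ f ∉ PC K C := by simpa [T] using hCT
  obtain ⟨hC, hf⟩ := hCT'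
  have hge : ∀ C', MinCov s C' → f ∉ PC K C' → P ≤ PC K C' := by
    intro C' hC' hf' g hg
    rw [← h, mem_colonI hs hI] at hg
    exact (hg C' hC').resolve_right hf'
  have hPC : P = PC K C := le_antisymm (hge C hC hf) hle
  refine ⟨C, hC, hPC, hf, ?_⟩
  intro C' hC' hne
  by_contra hf'
  have h1 : C ⊆ C' := PC_le.1 (hle.trans (hge C' hC' hf'))
  exact hne ((hC'.2 hC.1 h1).antisymm h1)

/-- The indicator exponent of a finite set. -/
def ind (c : ℕ) (A : Finset (Fin n)) : Fin n →₀ ℕ := Finsupp.indicator A (fun _ _ => c)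

open Classical in
lemma ind_apply (c : ℕ) (A : Finset (Fin n)) (i : Fin n) : ind c A i = if i ∈ A then c else 0 := by
  simp [ind, Finsupp.indicator_apply]

lemma ind_degree (c : ℕ) (A : Finset (Fin n)) : (ind c A).degree = c * A.card := by
  classical
  rw [Finsupp.degree_eq_sum]
  simp [ind_apply, Finset.sum_ite_mem, mul_comm]

/-- `A` isolates `C`. -/
def Iso (s : Set (Fin n →₀ ℕ)) (A C : Finset (Fin n)) : Prop :=
  MinCov s C ∧ (∀ i ∈ C, i ∉ A) ∧ ∀ C', MinCov s C' → C' ≠ C → ∃ i ∈ C', i ∈ A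

lemma colon_of_iso (hs : ∀ a ∈ s, ∀ i, a i ≤ 1)
    (hI : I = Ideal.span ((fun a => monomial a (1 : K)) '' s))
    {A C : Finset (Fin n)} (h : Iso s A C) :
    I.colon (Ideal.span {monomial (ind 1 A) (1 : K)} : Set (MvPolynomial (Fin n) K)) = PC K C := by
  apply colon_eq_of_isolating hs hI h.1
  · rw [monomial_mem_PC]
    rintro ⟨i, hi, h'⟩
    simp [ind_apply, h.2.1 i hi] at h'
  · intro C' hC' hne
    rw [monomial_mem_PC]
    obtain ⟨i, hi, h'⟩ := h.2.2 C' hC' hne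
    exact ⟨i, hi, by simp [ind_apply, h']⟩

lemma iso_compl {C : Finset (Fin n)} (hC : MinCov s C) : ∃ A, Iso s A C := by
  classical
  refine ⟨Cᶜ, hC, by simp, ?_⟩
  intro C' hC' hne
  by_contra! hcon
  have h1 : C' ⊆ C := fun i hi => by simpa using hcon i hi
  exact hne (h1.antisymm (hC.2 hC'.1 h1))

lemma ass_iff (hs : ∀ a ∈ s, ∀ i, a i ≤ 1)
    (hI : I = Ideal.span ((fun a => monomial a (1 : K)) '' s))
    (P : Ideal (MvPolynomial (Fin n) K)) :
    P ∈ Ass I ↔ ∃ C, MinCov s C ∧ P = PC K C := by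
  have h0 : ∀ f : MvPolynomial (Fin n) K,
      (⊥ : Submodule (MvPolynomial (Fin n) K) (MvPolynomial (Fin n) K ⧸ I)).colon
        {Ideal.Quotient.mk I f} = I.colon (Ideal.span {f} : Set (MvPolynomial (Fin n) K)) := by
    intro f
    ext g
    rw [Submodule.mem_colon_singleton, Ideal.mem_colon_span_singleton, Submodule.mem_bot,
      ← Ideal.Quotient.eq_zero_iff_mem, map_mul]
    rfl
  unfold Ass
  rw [AssociatedPrimes.mem_iff, isAssociatedPrime_iff]
  constructor
  · rintro ⟨hP, x, hx⟩
    obtain ⟨f, rfl⟩ := Ideal.Quotient.mk_surjective x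
    rw [h0] at hx
    obtain ⟨C, h1, h2, -⟩ := isolating_of_prime hs hI hP hx.symm
    exact ⟨C, h1, h2⟩
  · rintro ⟨C, hC, rfl⟩
    refine ⟨PC_prime C, ?_⟩
    obtain ⟨A, hA⟩ := iso_compl hC
    exact ⟨Ideal.Quotient.mk I (monomial (ind 1 A) 1), by rw [h0, colon_of_iso hs hI hA]⟩

lemma vnum_le (hs : ∀ a ∈ s, ∀ i, a i ≤ 1)
    (hI : I = Ideal.span ((fun a => monomial a (1 : K)) '' s))
    {A C : Finset (Fin n)} (h : Iso s A C) : vnum I ≤ A.card := by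
  apply Nat.sInf_le
  refine ⟨monomial (ind 1 A) 1, ?_, PC K C, (ass_iff hs hI _).2 ⟨C, h.1, rfl⟩,
    colon_of_iso hs hI h⟩
  exact isHomogeneous_monomial _ (by rw [ind_degree, one_mul])

lemma exists_vnum (hs : ∀ a ∈ s, ∀ i, a i ≤ 1)
    (hI : I = Ideal.span ((fun a => monomial a (1 : K)) '' s))
    (hne : ∃ C, MinCov s C) : ∃ A C, Iso s A C ∧ A.card ≤ vnum I := by
  classical
  have hmem := Nat.sInf_mem (s := {d : ℕ | ∃ f : MvPolynomial (Fin n) K, f.IsHomogeneous d ∧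
    ∃ 𝔭 ∈ Ass I, I.colon (Ideal.span {f}) = 𝔭}) (by
      obtain ⟨C, hC⟩ := hne
      obtain ⟨A, hA⟩ := iso_compl hC
      exact ⟨A.card, monomial (ind 1 A) 1,
        isHomogeneous_monomial _ (by rw [ind_degree, one_mul]),
        PC K C, (ass_iff hs hI _).2 ⟨C, hC, rfl⟩, colon_of_iso hs hI hA⟩)
  obtain ⟨f, hf, P, hP, hcol⟩ := hmem
  obtain ⟨C₀, hC₀, hPC⟩ := (ass_iff hs hI P).1 hP
  obtain ⟨C, hC, -, hfC, hoth⟩ := isolating_of_prime hs hI (hPC ▸ PC_prime C₀) hcol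
  rw [mem_PC] at hfC
  push Not at hfC
  obtain ⟨m, hm, hmC⟩ := hfC
  refine ⟨m.support, C, ⟨hC, fun i hi => by simpa using hmC i hi, ?_⟩, ?_⟩
  · intro C' hC' hne'
    obtain ⟨i, hi, h'⟩ := mem_PC.1 (hoth C' hC' hne') m hm
    exact ⟨i, hi, by simpa using h'⟩
  · have hd : m.degree = vnum I := by
      have := hf (mem_support_iff.1 hm)
      rwa [Finsupp.degree_eq_weight_one]
    rw [← hd, Finsupp.degree_apply, Finset.card_eq_sum_ones]
    apply Finset.sum_le_sum
    intro i hi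
    have := Finsupp.mem_support_iff.1 hi
    omega

lemma height_facts (hs : ∀ a ∈ s, ∀ i, a i ≤ 1)
    (hI : I = Ideal.span ((fun a => monomial a (1 : K)) '' s))
    (hunm : heightI I = bightI I) {C : Finset (Fin n)} (hC : MinCov s C) :
    C.card = heightI I := by
  have hset : {h : ℕ | ∃ 𝔭 ∈ Ass I, ∃ h𝔭 : 𝔭.IsPrime,
      Order.height (⟨𝔭, h𝔭⟩ : PrimeSpectrum (MvPolynomial (Fin n) K)) = (h : ℕ∞)}
      = {h | ∃ C, MinCov s C ∧ C.card = h} := by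
    ext h
    constructor
    · rintro ⟨P, hP, hp, hh⟩
      obtain ⟨C, hC, rfl⟩ := (ass_iff hs hI P).1 hP
      rw [PC_height] at hh
      exact ⟨C, hC, by exact_mod_cast hh⟩
    · rintro ⟨C, hC, rfl⟩
      exact ⟨PC K C, (ass_iff hs hI _).2 ⟨C, hC, rfl⟩, PC_prime C, PC_height C _⟩
  have h1 : heightI I ≤ C.card := by
    unfold heightI
    rw [hset]
    exact Nat.sInf_le ⟨C, hC, rfl⟩
  have h2 : C.card ≤ bightI I := by
    unfold bightI
    rw [hset]
    refine le_csSup ⟨n, ?_⟩ ⟨C, hC, rfl⟩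
    rintro _ ⟨C', _, rfl⟩
    simpa using Finset.card_le_univ C'
  omega

lemma monomial_good (p : ℕ) (hp : p.Prime) [CharP K p] (hs : ∀ a ∈ s, ∀ i, a i ≤ 1)
    (hI : I = Ideal.span ((fun a => monomial a (1 : K)) '' s)) (e : ℕ)
    {A C : Finset (Fin n)} (h : Iso s A C) :
    let f : MvPolynomial (Fin n) K := monomial (ind (p ^ e) A + ind (p ^ e - 1) C) (1 : K)
    f.IsHomogeneous (p ^ e * A.card + (p ^ e - 1) * C.card) ∧
      f ∈ (frobPow I (p ^ e)).colon I ∧ f ∉ frobPow I (p ^ e) := by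
  classical
  have hpos : 0 < p ^ e := pow_pos hp.pos e
  intro f
  refine ⟨isHomogeneous_monomial _ ?_, ?_, ?_⟩
  · rw [map_add, ind_degree, ind_degree]
  · have hcs : (frobPow I (p ^ e)).colon (I : Set (MvPolynomial (Fin n) K)) =
        (frobPow I (p ^ e)).colon ((fun a => monomial a (1 : K)) '' s) := by
      rw [hI, Ideal.colon_span]
    rw [hcs, Submodule.mem_colon]
    rintro _ ⟨a, ha, rfl⟩
    simp only [f, smul_eq_mul, monomial_mul]
    rw [mem_frob p hp hs hI, support_monomial]
    simp only [mul_one, one_ne_zero, if_false, Finset.mem_singleton, forall_eq]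
    intro C' hC'
    by_cases hne : C' = C
    · subst hne
      obtain ⟨i, hi, hai⟩ := hC'.1 a ha
      refine ⟨i, hi, ?_⟩
      simp only [Finsupp.add_apply, ind_apply, hi, h.2.1 i hi, if_true, if_false]
      omega
    · obtain ⟨i, hi, hA⟩ := h.2.2 C' hC' hne
      refine ⟨i, hi, ?_⟩
      simp only [Finsupp.add_apply, ind_apply, hA, if_true]
      omega
  · rw [mem_frob p hp hs hI]
    simp only [f, support_monomial, one_ne_zero, if_false, Finset.mem_singleton, forall_eq]
    intro hcon
    obtain ⟨i, hi, hle⟩ := hcon C h.1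
    simp only [Finsupp.add_apply, ind_apply, hi, h.2.1 i hi, if_true, if_false] at hle
    omega

lemma degree_lower (p : ℕ) (hp : p.Prime) [CharP K p] (hs : ∀ a ∈ s, ∀ i, a i ≤ 1)
    (hI : I = Ideal.span ((fun a => monomial a (1 : K)) '' s)) (e : ℕ)
    (hunm : heightI I = bightI I) {d : ℕ}
    {f : MvPolynomial (Fin n) K} (hf : f.IsHomogeneous d)
    (h1 : f ∈ (frobPow I (p ^ e)).colon I) (h2 : f ∉ frobPow I (p ^ e)) :
    p ^ e * (vnum I + heightI I) ≤ d + n := by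
  classical
  have hpos : 0 < p ^ e := pow_pos hp.pos e
  rw [mem_frob p hp hs hI] at h2
  push Not at h2
  obtain ⟨m, hm, C₀, hC₀, hlt⟩ := h2
  have hd : m.degree = d := by
    have := hf (mem_support_iff.1 hm)
    rwa [Finsupp.degree_eq_weight_one]
  have hcol : ∀ a ∈ s, ∀ C, MinCov s C → ∃ i ∈ C, p ^ e ≤ m i + a i := by
    intro a ha C hC
    have h3 := Submodule.mem_colon.1 h1 (monomial a (1 : K))
      (by rw [hI]; exact Ideal.subset_span ⟨a, ha, rfl⟩)
    rw [smul_eq_mul, mem_frob p hp hs hI] at h3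
    have h4 := h3 (m + a) (by
      rw [mem_support_iff, coeff_mul_monomial, mul_one]
      exact mem_support_iff.1 hm) C hC
    simpa using h4
  let B : Finset (Fin n) := Finset.univ.filter fun i => p ^ e ≤ m i
  let D : Finset (Fin n) := Finset.univ.filter fun i => m i + 1 = p ^ e
  have hsub : ∀ C, MinCov s C → (∀ i ∈ C, m i < p ^ e) → C ⊆ D := by
    intro C hC hlt i hi
    obtain ⟨a, ha, hpriv⟩ := minCov_private hC hi
    obtain ⟨j, hj, hle⟩ := hcol a ha C hC
    have h5 := hlt j hj
    have h6 := hs a ha j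
    have : j = i := hpriv j hj (by omega)
    subst this
    simp only [D, Finset.mem_filter, Finset.mem_univ, true_and]
    omega
  have hC₀D : C₀ ⊆ D := hsub C₀ hC₀ hlt
  have hiso : Iso s (B ∪ (D \ C₀)) C₀ := by
    refine ⟨hC₀, ?_, ?_⟩
    · intro i hi
      have := hlt i hi
      simp [B, hi, this]
    · intro C' hC' hne
      by_contra! hcon
      have h7 : C' ⊆ D := by
        apply hsub C' hC'
        intro i hi
        have := hcon i hi
        simp only [Finset.mem_union, not_or, B, Finset.mem_filter, Finset.mem_univ, true_and,
          not_le] at this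
        exact this.1
      have h8 : C' ⊆ C₀ := by
        intro i hi
        have := hcon i hi
        simp only [Finset.mem_union, not_or, Finset.mem_sdiff, not_and, not_not] at this
        exact this.2 (h7 hi)
      exact hne (h8.antisymm (hC₀.2 hC'.1 h8))
  have hv := vnum_le hs hI hiso
  have hh := height_facts hs hI hunm hC₀
  have hcard : (B ∪ (D \ C₀)).card ≤ B.card + (D.card - C₀.card) := by
    refine (Finset.card_union_le _ _).trans ?_
    rw [Finset.card_sdiff_of_subset hC₀D]
  have hDC := Finset.card_le_card hC₀D
  have hvh : vnum I + heightI I ≤ B.card + D.card := by omega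
  have hBD : p ^ e * (B.card + D.card) ≤ d + n := by
    have hn : n = ∑ i : Fin n, 1 := by simp
    have : p ^ e * (B.card + D.card) = ∑ i : Fin n,
        ((if p ^ e ≤ m i then p ^ e else 0) + (if m i + 1 = p ^ e then p ^ e else 0)) := by
      rw [Finset.sum_add_distrib, ← Finset.sum_filter, ← Finset.sum_filter]
      simp only [Finset.sum_const, smul_eq_mul, B, D]
      ring
    rw [this, ← hd, Finsupp.degree_eq_sum]
    refine le_trans ?_ (add_le_add_right hn.ge _)
    rw [← Finset.sum_add_distrib]
    apply Finset.sum_le_sum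
    intro i _
    split_ifs <;> omega
  exact (Nat.mul_le_mul_left _ hvh).trans hBD

end main

theorem stmt19 {K : Type*} [Field K] {n : ℕ} (p : ℕ) (hp : p.Prime) [CharP K p]
    (I : Ideal (MvPolynomial (Fin n) K)) (htop : I ≠ ⊤) (hbot : I ≠ ⊥)
    (hsqf : ∃ s : Set (Fin n →₀ ℕ), (∀ a ∈ s, ∀ i, a i ≤ 1) ∧
      I = Ideal.span ((fun a => monomial a (1 : K)) '' s))
    (hunm : heightI I = bightI I)
    (q : ℕ) (hq : ∃ e : ℕ, q = p ^ e) (hqn : n < q) :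
    ⌈(alphaq I q : ℝ) / (q : ℝ)⌉ = (vnum I : ℤ) + (heightI I : ℤ) := by
  obtain ⟨s, hs, hI⟩ := hsqf
  obtain ⟨e, rfl⟩ := hq
  have hpos : 0 < p ^ e := pow_pos hp.pos e
  have hne : ∃ C, MinCov s C := by
    by_contra! hcon
    apply htop
    rw [Ideal.eq_top_iff_one, mem_I hs hI]
    intro C hC
    exact absurd hC (hcon C)
  obtain ⟨A, C, hiso, hA⟩ := exists_vnum hs hI hne
  have hv := vnum_le hs hI hiso
  have hh := height_facts hs hI hunm hiso.1
  have hgood := monomial_good p hp hs hI e hiso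
  have hup : alphaq I (p ^ e) ≤ p ^ e * A.card + (p ^ e - 1) * C.card :=
    Nat.sInf_le ⟨_, hgood⟩
  have hmem : alphaq I (p ^ e) ∈ {d : ℕ | ∃ f : MvPolynomial (Fin n) K, f.IsHomogeneous d ∧
      f ∈ (frobPow I (p ^ e)).colon I ∧ f ∉ frobPow I (p ^ e)} :=
    Nat.sInf_mem ⟨_, _, hgood⟩
  obtain ⟨f, hf, hf1, hf2⟩ := hmem
  have hlow := degree_lower p hp hs hI e hunm hf hf1 hf2
  have hAv : A.card = vnum I := le_antisymm hA hv
  rw [hAv, hh] at hup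
  have hup' : alphaq I (p ^ e) ≤ p ^ e * (vnum I + heightI I) := by
    refine hup.trans ?_
    rw [Nat.mul_add]
    gcongr
    omega
  generalize p ^ e = q at *
  generalize alphaq I q = α at *
  have hq0 : (0 : ℝ) < q := by exact_mod_cast hpos
  rw [Int.ceil_eq_iff]
  push_cast
  constructor
  · rw [lt_div_iff₀ hq0]
    have h1 : ((q * (vnum I + heightI I) : ℕ) : ℝ) ≤ ((α + n : ℕ) : ℝ) := by exact_mod_cast hlow
    have h2 : (n : ℝ) < q := by exact_mod_cast hqn
    push_cast at h1
    linarith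
  · rw [div_le_iff₀ hq0]
    have h1 : (α : ℝ) ≤ ((q * (vnum I + heightI I) : ℕ) : ℝ) := by exact_mod_cast hup'
    push_cast at h1
    linarith

end
end
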